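/- Let M be an R-module, N a submodule of M, and endow Spec^s(M) with the second classical Zariski topology. Then V^{s*}(N) is an irreducible subset of Spec^s(M) if and only if soc(N), the sum of all second submodules of M contained in N, is a second submodule of M. In particular, Spec^s(M) is irreducible if and only if soc(M) is a second submodule of M. -/

import Mathlib

open Pointwise

variable (R M : Type*) [CommRing R] [AddCommGroup M] [Module R M]

/-- A nonzero submodule `S` is *second* if for every `r : R`, `r • S = S` or `r • S = ⊥`. -/
def IsSecondSubmodule (S : Submodule R M) : Prop :=
  S ≠ ⊥ ∧ ∀ r : R, r • S = S ∨ r • S = ⊥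

/-- The second spectrum of `M`: the collection of all second submodules of `M`. -/
def SecondSpec : Type _ := {S : Submodule R M // IsSecondSubmodule R M S}

/-- `V^{s*}(N)`: the set of second submodules contained in `N`. -/
def Vs (N : Submodule R M) : Set (SecondSpec R M) := {S | S.1 ≤ N}

/-- `W^s(N)`: the complement of `V^{s*}(N)` in `Spec^s(M)`. -/
def Ws (N : Submodule R M) : Set (SecondSpec R M) := (Vs R M N)ᶜ

/-- The second classical Zariski topology on `Spec^s(M)`, generated by the
sub-basis `{W^s(N) : N ≤ M}`. -/
instance secondZariski : TopologicalSpace (SecondSpec R M) :=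
  TopologicalSpace.generateFrom {U | ∃ N : Submodule R M, U = Ws R M N}

/-- The second socle of a submodule `N`: the sum of all second submodules of `M`
contained in `N`. -/
def secSocle (N : Submodule R M) : Submodule R M :=
  sSup {S : Submodule R M | IsSecondSubmodule R M S ∧ S ≤ N}

theorem secSocle_le (N : Submodule R M) : secSocle R M N ≤ N :=
  sSup_le fun _ h => h.2

theorem le_secSocle (N : Submodule R M) (S : SecondSpec R M) (h : S ∈ Vs R M N) :
    S.1 ≤ secSocle R M N :=
  le_sSup ⟨S.2, h⟩

theorem isClosed_Vs (N : Submodule R M) : IsClosed (Vs R M N) :=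
  ⟨TopologicalSpace.isOpen_generateFrom_of_mem ⟨N, rfl⟩⟩

theorem mem_open_of_le (S T : SecondSpec R M) (h : S.1 ≤ T.1) (U : Set (SecondSpec R M))
    (hU : IsOpen U) (hS : S ∈ U) : T ∈ U := by
  have hU' : TopologicalSpace.GenerateOpen {U | ∃ N : Submodule R M, U = Ws R M N} U := hU
  clear hU
  induction hU' with
  | basic s hs =>
    obtain ⟨K, rfl⟩ := hs
    exact fun hT => hS (le_trans h hT)
  | univ => trivial
  | inter s t _ _ h1 h2 => exact ⟨h1 hS.1, h2 hS.2⟩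
  | sUnion A _ ih =>
    obtain ⟨s, hs, hSs⟩ := hS
    exact ⟨s, hs, ih s hs hSs⟩

theorem vs_irreducible_iff (N : Submodule R M) :
    IsIrreducible (Vs R M N) ↔ IsSecondSubmodule R M (secSocle R M N) := by
  constructor
  · rintro ⟨⟨S, hS⟩, hI⟩
    refine ⟨fun h0 => S.2.1 (le_bot_iff.1 (h0 ▸ le_secSocle R M N S hS)), fun r => ?_⟩
    have key := isPreirreducible_iff_isClosed_union_isClosed.1 hI
      (Vs R M (r • secSocle R M N)) (Vs R M (LinearMap.ker (LinearMap.lsmul R M r)))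
      (isClosed_Vs R M _) (isClosed_Vs R M _) ?_
    · rcases key with h | h
      · left
        apply le_antisymm
        · rintro x hx
          obtain ⟨y, hy, rfl⟩ := (Submodule.mem_smul_pointwise_iff_exists _ _ _).1 hx
          exact Submodule.smul_mem _ _ hy
        · exact sSup_le fun T hT => h (show (⟨T, hT.1⟩ : SecondSpec R M) ∈ Vs R M N from hT.2)
      · right
        have hle : secSocle R M N ≤ LinearMap.ker (LinearMap.lsmul R M r) :=
          sSup_le fun T hT => h (show (⟨T, hT.1⟩ : SecondSpec R M) ∈ Vs R M N from hT.2)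
        rw [eq_bot_iff]
        intro x hx
        obtain ⟨y, hy, rfl⟩ := (Submodule.mem_smul_pointwise_iff_exists _ _ _).1 hx
        simpa using hle hy
    · intro T hT
      rcases T.2.2 r with h | h
      · left
        change T.1 ≤ _
        intro x hx
        rw [← h] at hx
        obtain ⟨y, hy, rfl⟩ := (Submodule.mem_smul_pointwise_iff_exists _ _ _).1 hx
        exact Submodule.smul_mem_pointwise_smul _ _ _ (le_secSocle R M N T hT hy)
      · right
        change T.1 ≤ _
        intro x hx
        have := Submodule.smul_mem_pointwise_smul x r _ hx
        rw [h] at this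
        simpa using this
  · intro h
    let T : SecondSpec R M := ⟨secSocle R M N, h⟩
    have hT : T ∈ Vs R M N := secSocle_le R M N
    refine ⟨⟨T, hT⟩, ?_⟩
    rintro U V hU hV ⟨A, hA, hAU⟩ ⟨B, hB, hBV⟩
    exact ⟨T, hT, mem_open_of_le R M A T (le_secSocle R M N A hA) U hU hAU,
      mem_open_of_le R M B T (le_secSocle R M N B hB) V hV hBV⟩

/-- Cor 2.27: `V^{s*}(N)` is irreducible iff `soc(N)` is a second submodule of `M`.
In particular, `Spec^s(M)` is irreducible iff `soc(M)` is a second submodule. -/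
theorem stmt15 :
    (∀ N : Submodule R M,
        IsIrreducible (Vs R M N) ↔ IsSecondSubmodule R M (secSocle R M N)) ∧
      (IsIrreducible (Set.univ : Set (SecondSpec R M)) ↔
        IsSecondSubmodule R M (secSocle R M ⊤)) := by
  refine ⟨vs_irreducible_iff R M, ?_⟩
  rw [← vs_irreducible_iff R M ⊤]
  have : Vs R M ⊤ = Set.univ := Set.eq_univ_of_forall fun S => (le_top : S.1 ≤ ⊤)
  rw [this]
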